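/- arXiv:solv-int/9509001 — 2 statements merged into one kernel-verified Lean document; each statement's English description precedes it below -/
import Mathlib

section
/- The operators S_l = Σ_i x_i D_i^l and I_n = Σ_i D_i^n satisfy the algebra [I_l, I_n] = 0, [S_l, I_n] = −n I_{l+n−1}, and [S_l, S_n] = (l − n) S_{l+n−1}, for all l ≥ 0 and n ≥ 1. -/
open Finset

noncomputable section

/-- The open set of points with pairwise distinct coordinates. -/
def Omega (N : ℕ) : Set (Fin N → ℝ) := {x | Function.Injective x}

/-- The coordinate-swap (transposition) operator `P_{ij}`. -/
def Pswap {N : ℕ} (i j : Fin N) (f : (Fin N → ℝ) → ℝ) : (Fin N → ℝ) → ℝ :=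
  fun x => f (x ∘ Equiv.swap i j)

/-- The difference operator `Δ_i = ∑_{j ≠ i} (x_i - x_j)⁻¹ (1 - P_{ij})`. -/
def Delta {N : ℕ} (i : Fin N) (f : (Fin N → ℝ) → ℝ) : (Fin N → ℝ) → ℝ :=
  fun x => ∑ j ∈ Finset.univ.erase i, (f x - f (x ∘ Equiv.swap i j)) / (x i - x j)

/-- The partial derivative operator `∂_i`. -/
def pd {N : ℕ} (i : Fin N) (f : (Fin N → ℝ) → ℝ) : (Fin N → ℝ) → ℝ :=
  fun x => fderiv ℝ f x (Pi.single i 1)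

/-- Multiplication by the `i`-th coordinate. -/
def xmul {N : ℕ} (i : Fin N) (f : (Fin N → ℝ) → ℝ) : (Fin N → ℝ) → ℝ :=
  fun x => x i * f x

/-- The Dunkl operator `D_i = ∂_i + g Δ_i`. -/
def Dunkl {N : ℕ} (g : ℝ) (i : Fin N) (f : (Fin N → ℝ) → ℝ) : (Fin N → ℝ) → ℝ :=
  fun x => pd i f x + g * Delta i f x

/-- `S_l = ∑_i x_i D_i^l`. -/
def Sop {N : ℕ} (g : ℝ) (l : ℕ) (f : (Fin N → ℝ) → ℝ) : (Fin N → ℝ) → ℝ :=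
  fun x => ∑ i, x i * (Dunkl g i)^[l] f x

/-- `I_n = ∑_i D_i^n`. -/
def Iop {N : ℕ} (g : ℝ) (n : ℕ) (f : (Fin N → ℝ) → ℝ) : (Fin N → ℝ) → ℝ :=
  fun x => ∑ i, (Dunkl g i)^[n] f x

/-!
The Dunkl operators `D_i`, the coordinates `x_i` and the exchange operators `g P_{ij}` satisfy the
relations of the rational Cherednik algebra, which give `[D_i^n, x_j]` in terms of the divided
differences `R_{n-1}(D_i, D_j) = (D_i^n - D_j^n) / (D_i - D_j)`. In `[I_n, x_j]` the exchange terms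
cancel, leaving `n D_j^{n-1}`. In `S_l S_n` they add up to
`∑ x_i R_{l-1}(D_i, D_j) (D_j^n - D_i^n) g P_{ij}`, which is symmetric in `l` and `n` and so
drops out of `[S_l, S_n]`.

The `D_i` commute for two reasons: the divided differences `(x_i - x_j)⁻¹ (1 - P_{ij})` satisfy the
quadratic relations of the Fomin–Kirillov algebra, so that their sums over `j` commute, and a
directional derivative `∂_v` with `v_i = v_j` commutes with the divided difference in `x_i`, `x_j`.
-/

attribute [local instance 100] LieRing.ofAssociativeRing

section Commutators

variable {A : Type*} [Ring A]

lemma mul_lie_eq (a b c : A) : ⁅a * b, c⁆ = a * ⁅b, c⁆ + ⁅a, c⁆ * b := by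
  simp only [Ring.lie_def]
  noncomm_ring

lemma pow_lie_eq_sum (a x : A) (n : ℕ) :
    ⁅a ^ n, x⁆ = ∑ k ∈ range n, a ^ k * ⁅a, x⁆ * a ^ (n - 1 - k) := by
  induction n with
  | zero => simp [Ring.lie_def]
  | succ n ih =>
    rw [pow_succ, mul_lie_eq, ih, sum_range_succ, add_comm, sum_mul]
    congr 1
    · refine sum_congr rfl fun k hk => ?_
      rw [mul_assoc _ (a ^ _) a, ← pow_succ]
      congr 2
      have := mem_range.1 hk
      omega
    · simp

/-- The divided difference `R_{n-1}(a, b) = (a ^ n - b ^ n) / (a - b)` of the `n`-th power, written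
as a sum so that it makes sense in any ring; the index is shifted by one against the usual one. -/
def powDividedDiff (n : ℕ) (a b : A) : A :=
  ∑ k ∈ range n, a ^ k * b ^ (n - 1 - k)

lemma powDividedDiff_comm {a b : A} (h : Commute a b) (n : ℕ) :
    powDividedDiff n a b = powDividedDiff n b a :=
  h.geom_sum₂_comm n

lemma powDividedDiff_mul_sub_pow {a b : A} (h : Commute a b) (l n : ℕ) :
    powDividedDiff l a b * (b ^ n - a ^ n) = powDividedDiff n a b * (b ^ l - a ^ l) := by
  have commute_a (m : ℕ) : Commute (powDividedDiff m a b) a :=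
    Commute.sum_left _ _ _ fun _ _ => ((Commute.refl a).pow_left _).mul_left (h.symm.pow_left _)
  have commute_b (m : ℕ) : Commute (powDividedDiff m a b) b :=
    Commute.sum_left _ _ _ fun _ _ => (h.pow_left _).mul_left ((Commute.refl b).pow_left _)
  have commute_self : Commute (powDividedDiff l a b) (powDividedDiff n a b) :=
    Commute.sum_right _ _ _ fun _ _ =>
      ((commute_a l).pow_right _).mul_right ((commute_b l).pow_right _)
  have factor (m : ℕ) : powDividedDiff m a b * (b - a) = b ^ m - a ^ m := by
    rw [powDividedDiff_comm h]
    exact h.symm.geom_sum₂_mul m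
  rw [← factor n, ← factor l, ← mul_assoc, ← mul_assoc, commute_self.eq]

lemma lie_sum_pow_sum_pow {ι : Type*} [Fintype ι] {D : ι → A}
    (hD : ∀ i j, Commute (D i) (D j)) (l n : ℕ) : ⁅∑ i, D i ^ l, ∑ i, D i ^ n⁆ = 0 :=
  (Commute.sum_left _ _ _ fun i _ => Commute.sum_right _ _ _ fun j _ =>
    (hD i j).pow_pow l n).lie_eq

end Commutators

section Cherednik

variable {ι A : Type*} [Fintype ι] [DecidableEq ι] [Ring A]

/-- The relations of the rational Cherednik algebra of type `A` between the Dunkl operators `D i`,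
the coordinates `X i` and the exchange operators `Q i j = g P_{ij}`. The coupling `g` is absorbed
into `Q`. -/
structure IsCherednikTriple (D X : ι → A) (Q : ι → ι → A) : Prop where
  commute_D : ∀ i j, Commute (D i) (D j)
  commute_X : ∀ i j, Commute (X i) (X j)
  symm_Q : ∀ i j, Q i j = Q j i
  semiconjBy : ∀ i j, SemiconjBy (Q i j) (D i) (D j)
  lie_of_ne : ∀ i j, i ≠ j → ⁅D i, X j⁆ = -Q i j
  lie_self : ∀ i, ⁅D i, X i⁆ = 1 + ∑ k ∈ univ.erase i, Q i k

namespace IsCherednikTriple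

variable {D X : ι → A} {Q : ι → ι → A} (h : IsCherednikTriple D X Q)
include h

lemma sum_pow_mul_Q_mul_pow (n : ℕ) (i j : ι) :
    ∑ k ∈ range n, D i ^ k * Q i j * D i ^ (n - 1 - k) = powDividedDiff n (D i) (D j) * Q i j := by
  rw [powDividedDiff, sum_mul]
  refine sum_congr rfl fun k _ => ?_
  rw [mul_assoc, ((h.semiconjBy i j).pow_right _).eq, mul_assoc]

lemma pow_lie_of_ne (n : ℕ) {i j : ι} (hij : i ≠ j) :
    ⁅D i ^ n, X j⁆ = -(powDividedDiff n (D i) (D j) * Q i j) := by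
  rw [pow_lie_eq_sum, h.lie_of_ne i j hij, ← h.sum_pow_mul_Q_mul_pow]
  simp only [mul_neg, neg_mul, sum_neg_distrib]

lemma pow_lie_self (n : ℕ) (i : ι) :
    ⁅D i ^ n, X i⁆ =
      n • D i ^ (n - 1) + ∑ k ∈ univ.erase i, powDividedDiff n (D i) (D k) * Q i k := by
  have hpow : ∑ k ∈ range n, D i ^ k * D i ^ (n - 1 - k) = n • D i ^ (n - 1) := by
    rw [← card_range n, ← sum_const, card_range]
    refine sum_congr rfl fun k hk => ?_
    rw [← pow_add, Nat.add_sub_cancel' (Nat.le_sub_one_of_lt (mem_range.1 hk))]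
  simp only [pow_lie_eq_sum, h.lie_self, mul_add, add_mul, mul_one, mul_sum, sum_mul,
    sum_add_distrib, hpow, ← h.sum_pow_mul_Q_mul_pow]
  rw [sum_comm]

-- The exchange terms of `⁅D j ^ n, X j⁆` cancel those of all `⁅D i ^ n, X j⁆` with `i ≠ j`.
lemma sum_pow_lie (n : ℕ) (j : ι) : ⁅∑ i, D i ^ n, X j⁆ = n • D j ^ (n - 1) := by
  have exchange : ∑ i ∈ univ.erase j, ⁅D i ^ n, X j⁆ =
      -∑ i ∈ univ.erase j, powDividedDiff n (D j) (D i) * Q j i := by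
    rw [← sum_neg_distrib]
    refine sum_congr rfl fun i hi => ?_
    rw [h.pow_lie_of_ne n (ne_of_mem_erase hi), powDividedDiff_comm (h.commute_D i j), h.symm_Q]
  rw [sum_lie, ← add_sum_erase univ _ (mem_univ j), h.pow_lie_self, exchange, add_neg_cancel_right]

theorem lie_sum_mul_pow_sum_pow (l n : ℕ) :
    ⁅∑ i, X i * D i ^ l, ∑ i, D i ^ n⁆ = -(n • ∑ i, D i ^ (l + n - 1)) := by
  rw [sum_lie, smul_sum, ← sum_neg_distrib]
  refine sum_congr rfl fun j _ => ?_
  have hcomm : ⁅D j ^ l, ∑ i, D i ^ n⁆ = 0 :=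
    (Commute.sum_right _ _ _ fun i _ => (h.commute_D j i).pow_pow l n).lie_eq
  rw [mul_lie_eq, hcomm, mul_zero, zero_add, ← lie_skew, h.sum_pow_lie, neg_mul, smul_mul_assoc]
  cases n with
  | zero => simp
  | succ n => rw [← pow_add]; congr 3; omega

lemma sum_pow_lie_mul_pow (l n : ℕ) (i : ι) :
    ∑ j, ⁅D i ^ l, X j⁆ * D j ^ n = l • D i ^ (l + n - 1) +
      ∑ j ∈ univ.erase i, powDividedDiff l (D i) (D j) * (D j ^ n - D i ^ n) * Q i j := by
  have hdiag : (l • D i ^ (l - 1)) * D i ^ n = l • D i ^ (l + n - 1) := by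
    cases l with
    | zero => simp
    | succ l => rw [smul_mul_assoc, ← pow_add]; congr 2; omega
  rw [← add_sum_erase univ _ (mem_univ i), h.pow_lie_self, add_mul, hdiag, add_assoc, sum_mul,
    ← sum_add_distrib]
  congr 1
  refine sum_congr rfl fun j hj => ?_
  have move_left : Q i j * D i ^ n = D j ^ n * Q i j := ((h.semiconjBy i j).pow_right n).eq
  have move_right : Q i j * D j ^ n = D i ^ n * Q i j := by
    rw [h.symm_Q]
    exact ((h.semiconjBy j i).pow_right n).eq
  rw [h.pow_lie_of_ne l (ne_of_mem_erase hj).symm, neg_mul, mul_assoc, mul_assoc, move_left,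
    move_right]
  noncomm_ring

lemma sum_mul_pow_mul_sum_mul_pow (l n : ℕ) :
    (∑ i, X i * D i ^ l) * ∑ i, X i * D i ^ n =
      ∑ i, ∑ j, X i * X j * (D i ^ l * D j ^ n) + l • ∑ i, X i * D i ^ (l + n - 1) +
      ∑ i, X i * ∑ j ∈ univ.erase i,
        powDividedDiff l (D i) (D j) * (D j ^ n - D i ^ n) * Q i j := by
  have normal_order (i j : ι) : X i * D i ^ l * (X j * D j ^ n) =
      X i * X j * (D i ^ l * D j ^ n) + X i * (⁅D i ^ l, X j⁆ * D j ^ n) := by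
    rw [Ring.lie_def]
    noncomm_ring
  simp only [sum_mul_sum, normal_order, sum_add_distrib, ← mul_sum, h.sum_pow_lie_mul_pow, mul_add,
    smul_sum, mul_smul_comm, add_assoc]

-- By `powDividedDiff_mul_sub_pow` the exchange terms of the product are symmetric in `l` and `n`.
theorem lie_sum_mul_pow_sum_mul_pow (l n : ℕ) :
    ⁅∑ i, X i * D i ^ l, ∑ i, X i * D i ^ n⁆ =
      ((l : ℤ) - n) • ∑ i, X i * D i ^ (l + n - 1) := by
  have normal_ordered : ∑ i, ∑ j, X i * X j * (D i ^ l * D j ^ n) =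
      ∑ i, ∑ j, X i * X j * (D i ^ n * D j ^ l) := by
    rw [sum_comm]
    refine sum_congr rfl fun i _ => sum_congr rfl fun j _ => ?_
    rw [(h.commute_X j i).eq, ((h.commute_D j i).pow_pow l n).eq]
  have exchange (i j : ι) := powDividedDiff_mul_sub_pow (h.commute_D i j) l n
  rw [Ring.lie_def, h.sum_mul_pow_mul_sum_mul_pow, h.sum_mul_pow_mul_sum_mul_pow, normal_ordered,
    add_comm n l, sub_smul, natCast_zsmul, natCast_zsmul]
  simp only [exchange]
  abel

end IsCherednikTriple

end Cherednik

section FominKirillov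

variable {ι A : Type*} [Ring A]

/-- The quadratic relations of the Fomin–Kirillov algebra, without the relation `(T i j) ^ 2 = 0`.
-/
structure IsFominKirillov (T : ι → ι → A) : Prop where
  antisymm : ∀ i j, T j i = -T i j
  commute_of_disjoint : ∀ i j k l, i ≠ k → i ≠ l → j ≠ k → j ≠ l → Commute (T i j) (T k l)
  three_term : ∀ i j k, i ≠ j → j ≠ k → k ≠ i →
    T i j * T j k + T j k * T k i + T k i * T i j = 0

namespace IsFominKirillov

variable {T : ι → ι → A} (hT : IsFominKirillov T)
include hT

lemma lie_add_lie_add_lie {i j k : ι} (hij : i ≠ j) (hjk : j ≠ k) (hki : k ≠ i) :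
    ⁅T i j, T j k⁆ + ⁅T i k, T j i⁆ + ⁅T i k, T j k⁆ = 0 := by
  have hijk := hT.three_term i j k hij hjk hki
  have hjik := hT.three_term j i k hij.symm hki.symm hjk.symm
  calc ⁅T i j, T j k⁆ + ⁅T i k, T j i⁆ + ⁅T i k, T j k⁆
    _ = (T i j * T j k + T j k * T k i + T k i * T i j) -
        (T j i * T i k + T i k * T k j + T k j * T j i) := by
      rw [hT.antisymm i j, hT.antisymm j k, hT.antisymm i k]
      simp only [Ring.lie_def]
      noncomm_ring
    _ = 0 := by rw [hijk, hjik, sub_zero]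

lemma smul {R : Type*} [CommSemiring R] [Algebra R A] (g : R) :
    IsFominKirillov fun i j => g • T i j where
  antisymm i j := by rw [hT.antisymm i j, smul_neg]
  commute_of_disjoint i j k l hik hil hjk hjl :=
    ((hT.commute_of_disjoint i j k l hik hil hjk hjl).smul_left g).smul_right g
  three_term i j k hij hjk hki := by
    simp only [smul_mul_smul_comm, ← smul_add, hT.three_term i j k hij hjk hki, smul_zero]

variable [Fintype ι] [DecidableEq ι]

theorem commute_sum (i j : ι) :
    Commute (∑ k ∈ univ.erase i, T i k) (∑ k ∈ univ.erase j, T j k) := by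
  obtain rfl | hij := eq_or_ne i j
  · exact Commute.refl _
  have split_i : ∑ k ∈ univ.erase i, T i k = T i j + ∑ k ∈ (univ.erase i).erase j, T i k :=
    (add_sum_erase _ _ (by simp [hij.symm])).symm
  have split_j : ∑ k ∈ univ.erase j, T j k = T j i + ∑ k ∈ (univ.erase i).erase j, T j k := by
    rw [erase_right_comm]
    exact (add_sum_erase _ _ (by simp [hij])).symm
  have collapse : ∀ k ∈ (univ.erase i).erase j,
      ∑ l ∈ (univ.erase i).erase j, ⁅T i k, T j l⁆ = ⁅T i k, T j k⁆ := fun k hk =>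
    sum_eq_single_of_mem k hk fun l hl hlk => by
      simp only [mem_erase] at hk hl
      exact (hT.commute_of_disjoint i k j l hij hl.2.1.symm hk.1 hlk.symm).lie_eq
  have hji : ⁅T i j, T j i⁆ = 0 := by rw [hT.antisymm i j, lie_neg, lie_self, neg_zero]
  rw [commute_iff_lie_eq, split_i, split_j, add_lie, lie_add, lie_add, hji, zero_add, lie_sum,
    sum_lie, sum_lie_sum, sum_congr rfl collapse, ← add_assoc, ← sum_add_distrib,
    ← sum_add_distrib]
  refine sum_eq_zero fun k hk => ?_
  simp only [mem_erase] at hk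
  exact hT.lie_add_lie_add_lie hij hk.1.symm hk.2.1

-- The mixed brackets collapse to `⁅d i, T j i⁆ + ⁅T i j, d j⁆ = -⁅d i + d j, T i j⁆`.
theorem commute_add_sum {d : ι → A} (commute_d : ∀ i j, Commute (d i) (d j))
    (commute_T : ∀ i j k, k ≠ i → k ≠ j → Commute (d k) (T i j))
    (commute_add_T : ∀ i j, Commute (d i + d j) (T i j)) (i j : ι) :
    Commute (d i + ∑ k ∈ univ.erase i, T i k) (d j + ∑ k ∈ univ.erase j, T j k) := by
  obtain rfl | hij := eq_or_ne i j
  · exact Commute.refl _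
  have lie_sum_T {i j : ι} (hij : i ≠ j) : ⁅d i, ∑ k ∈ univ.erase j, T j k⁆ = ⁅d i, T j i⁆ := by
    rw [lie_sum]
    exact sum_eq_single_of_mem i (by simp [hij]) fun k _ hki =>
      (commute_T j k i hij hki.symm).lie_eq
  have mixed : ⁅d i, T j i⁆ + ⁅T i j, d j⁆ = 0 := by
    have hadd := (commute_add_T i j).lie_eq
    rw [add_lie] at hadd
    rw [hT.antisymm i j, lie_neg, ← lie_skew (T i j) (d j), ← neg_add, hadd, neg_zero]
  rw [commute_iff_lie_eq, add_lie, lie_add, lie_add, (commute_d i j).lie_eq,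
    (hT.commute_sum i j).lie_eq, lie_sum_T hij, ← lie_skew _ (d j), lie_sum_T hij.symm, lie_skew,
    add_zero, zero_add, mixed]

end IsFominKirillov

end FominKirillov

open scoped ContDiff

section SmoothFunctions

open TopologicalSpace

variable {E : Type*} [NormedAddCommGroup E] [NormedSpace ℝ E] {U : Opens E}

/-- The smooth functions on the open set `U`. Each is encoded by its extension by zero to the whole
space, so that equality of elements is equality on `U`. -/
def smoothSubmodule (U : Opens E) : Submodule ℝ (E → ℝ) where
  carrier := {f | ContDiffOn ℝ ∞ f U ∧ ∀ x ∉ U, f x = 0}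
  add_mem' hf hg := ⟨hf.1.add hg.1, fun x hx => by simp [hf.2 x hx, hg.2 x hx]⟩
  zero_mem' := ⟨contDiffOn_const, fun _ _ => rfl⟩
  smul_mem' c _ hf := ⟨contDiffOn_const.smul hf.1, fun x hx => by simp [hf.2 x hx]⟩

/-- The elements of `smoothSubmodule U`. This is a separate type because `rw` and `simp` fail to
identify the two additive structures on the endomorphisms of a submodule. -/
def SmoothFunctions (U : Opens E) : Type _ := smoothSubmodule U

namespace SmoothFunctions

instance : AddCommGroup (SmoothFunctions U) := inferInstanceAs (AddCommGroup (smoothSubmodule U))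

instance : Module ℝ (SmoothFunctions U) := inferInstanceAs (Module ℝ (smoothSubmodule U))

instance : CoeFun (SmoothFunctions U) fun _ => E → ℝ := ⟨Subtype.val⟩

lemma coe_add (F G : SmoothFunctions U) : (F + G : SmoothFunctions U).1 = F.1 + G.1 :=
  rfl

lemma coe_smul (c : ℝ) (F : SmoothFunctions U) : (c • F : SmoothFunctions U).1 = c • F.1 :=
  rfl

lemma sum_apply {κ : Type*} (s : Finset κ) (F : κ → SmoothFunctions U) (x : E) :
    (∑ k ∈ s, F k) x = ∑ k ∈ s, F k x :=
  (congrFun (Submodule.coe_sum (smoothSubmodule U) F s) x).trans (Finset.sum_apply x s _)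

lemma lie_apply (S T : Module.End ℝ (SmoothFunctions U)) (F : SmoothFunctions U) (x : E) :
    ⁅S, T⁆ F x = S (T F) x - T (S F) x :=
  rfl

lemma ext {F G : SmoothFunctions U} (h : ∀ x ∈ U, F x = G x) : F = G := by
  refine Subtype.ext (funext fun x => ?_)
  by_cases hx : x ∈ U
  · exact h x hx
  · rw [F.2.2 x hx, G.2.2 x hx]

lemma end_ext {S T : Module.End ℝ (SmoothFunctions U)} (h : ∀ F, ∀ x ∈ U, S F x = T F x) : S = T :=
  LinearMap.ext fun F => ext (h F)

lemma contDiffAt (F : SmoothFunctions U) {x : E} (hx : x ∈ U) : ContDiffAt ℝ ∞ F x :=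
  F.2.1.contDiffAt (U.isOpen.mem_nhds hx)

lemma differentiableAt (F : SmoothFunctions U) {x : E} (hx : x ∈ U) : DifferentiableAt ℝ F x :=
  (contDiffAt F hx).differentiableAt (by simp)

/-- The element of `SmoothFunctions U` which agrees on `U` with a given function smooth on `U`. -/
def cutoff {f : E → ℝ} (hf : ContDiffOn ℝ ∞ f U) : SmoothFunctions U :=
  ⟨(U : Set E).indicator f, hf.congr fun _ hx => Set.indicator_of_mem hx f,
    fun _ hx => Set.indicator_of_notMem hx f⟩

lemma cutoff_apply {f : E → ℝ} (hf : ContDiffOn ℝ ∞ f U) {x : E} (hx : x ∈ U) :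
    cutoff hf x = f x :=
  Set.indicator_of_mem hx f

lemma contDiffOn_fderiv_apply (F : SmoothFunctions U) (v : E) :
    ContDiffOn ℝ ∞ (fun x => fderiv ℝ F x v) U :=
  (F.2.1.fderiv_of_isOpen U.isOpen (by simp)).clm_apply contDiffOn_const

/-- The derivative in the direction `v`, as an operator on smooth functions. -/
def dirDeriv (v : E) : Module.End ℝ (SmoothFunctions U) where
  toFun F := cutoff (contDiffOn_fderiv_apply F v)
  map_add' F G := ext fun x hx => by
    simp only [coe_add, Pi.add_apply, cutoff_apply _ hx,
      fderiv_add (differentiableAt F hx) (differentiableAt G hx), add_apply]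
  map_smul' c F := ext fun x hx => by
    simp only [coe_smul, Pi.smul_apply, cutoff_apply _ hx,
      fderiv_const_smul (differentiableAt F hx), smul_apply, RingHom.id_apply]

lemma dirDeriv_apply (v : E) (F : SmoothFunctions U) {x : E} (hx : x ∈ U) :
    dirDeriv v F x = fderiv ℝ F x v :=
  cutoff_apply (contDiffOn_fderiv_apply F v) hx

lemma dirDeriv_add (v w : E) :
    (dirDeriv (v + w) : Module.End ℝ (SmoothFunctions U)) = dirDeriv v + dirDeriv w :=
  end_ext fun F x hx => by
    simp only [LinearMap.add_apply, coe_add, Pi.add_apply, dirDeriv_apply _ _ hx, map_add]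

lemma dirDeriv_dirDeriv_apply (v w : E) (F : SmoothFunctions U) {x : E} (hx : x ∈ U) :
    dirDeriv v (dirDeriv w F) x = fderiv ℝ (fderiv ℝ F) x v w := by
  have eventuallyEq : dirDeriv w F =ᶠ[nhds x] fun y => fderiv ℝ F y w :=
    Filter.eventually_of_mem (U.isOpen.mem_nhds hx) fun y hy => dirDeriv_apply w F hy
  have differentiable : DifferentiableAt ℝ (fderiv ℝ F) x :=
    ((contDiffAt F hx).fderiv_right (m := 1) (by norm_cast)).differentiableAt (by simp)
  rw [dirDeriv_apply v _ hx, eventuallyEq.fderiv_eq,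
    fderiv_clm_apply differentiable (differentiableAt_const w)]
  simp

theorem dirDeriv_commute (v w : E) :
    Commute (dirDeriv v : Module.End ℝ (SmoothFunctions U)) (dirDeriv w) :=
  end_ext fun F x hx => by
    have symmetric : IsSymmSndFDerivAt ℝ F x :=
      ((contDiffAt F hx).of_le (m := 2) (by norm_cast)).isSymmSndFDerivAt (by simp)
    simp only [Module.End.mul_apply, dirDeriv_dirDeriv_apply _ _ _ hx]
    exact symmetric v w

/-- Multiplication by a function smooth on `U`. -/
def mulEnd {a : E → ℝ} (ha : ContDiffOn ℝ ∞ a U) : Module.End ℝ (SmoothFunctions U) where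
  toFun F := ⟨fun x => a x * F x, ha.mul F.2.1, fun x hx => by simp [F.2.2 x hx]⟩
  map_add' F G := ext fun x _ => mul_add (a x) (F x) (G x)
  map_smul' c F := ext fun x _ => mul_left_comm (a x) c (F x)

lemma mulEnd_apply {a : E → ℝ} (ha : ContDiffOn ℝ ∞ a U) (F : SmoothFunctions U) (x : E) :
    mulEnd ha F x = a x * F x :=
  rfl

lemma dirDeriv_mulEnd_apply (v : E) {a : E → ℝ} (ha : ContDiffOn ℝ ∞ a U) (F : SmoothFunctions U)
    {x : E} (hx : x ∈ U) :
    dirDeriv v (mulEnd ha F) x = a x * dirDeriv v F x + fderiv ℝ a x v * F x := by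
  have differentiable : DifferentiableAt ℝ a x :=
    (ha.contDiffAt (U.isOpen.mem_nhds hx)).differentiableAt (by simp)
  rw [dirDeriv_apply v _ hx, dirDeriv_apply v _ hx]
  change fderiv ℝ (fun y => a y * F y) x v = _
  rw [fderiv_fun_mul differentiable (differentiableAt F hx)]
  simp [mul_comm]

/-- Composition with a linear map under which `U` is its own preimage. -/
def compEnd (e : E →L[ℝ] E) (he : ∀ x, e x ∈ U ↔ x ∈ U) : Module.End ℝ (SmoothFunctions U) where
  toFun F := ⟨fun x => F (e x), F.2.1.comp e.contDiff.contDiffOn fun x hx => (he x).2 hx,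
    fun x hx => F.2.2 _ fun hex => hx ((he x).1 hex)⟩
  map_add' _ _ := rfl
  map_smul' _ _ := rfl

lemma compEnd_apply (e : E →L[ℝ] E) (he : ∀ x, e x ∈ U ↔ x ∈ U) (F : SmoothFunctions U) (x : E) :
    compEnd e he F x = F (e x) :=
  rfl

theorem dirDeriv_mul_compEnd (v : E) (e : E →L[ℝ] E) (he : ∀ x, e x ∈ U ↔ x ∈ U) :
    dirDeriv v * compEnd e he = compEnd e he * dirDeriv (e v) :=
  end_ext fun F x hx => by
    have hex : e x ∈ U := (he x).2 hx
    have chain := (differentiableAt F hex).hasFDerivAt.comp x e.hasFDerivAt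
    rw [Module.End.mul_apply, Module.End.mul_apply, compEnd_apply, dirDeriv_apply v _ hx,
      dirDeriv_apply _ _ hex]
    change fderiv ℝ (F ∘ e) x v = _
    rw [chain.fderiv, ContinuousLinearMap.comp_apply]

end SmoothFunctions

end SmoothFunctions

section Permutations

variable {ι : Type*} [DecidableEq ι]

lemma comp_swap_eq_self {α : Type*} {v : ι → α} {i j : ι} (hv : v i = v j) :
    v ∘ Equiv.swap i j = v := by
  rw [Equiv.comp_swap_eq_update, hv, Function.update_eq_self, ← hv, Function.update_eq_self]

lemma swap_mul_swap_rotate {i j k : ι} (hij : i ≠ j) (hki : k ≠ i) :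
    Equiv.swap j k * Equiv.swap k i = Equiv.swap i j * Equiv.swap j k := by
  rw [Equiv.mul_swap_eq_swap_mul, Equiv.swap_apply_right, Equiv.swap_apply_of_ne_of_ne hij hki.symm,
    Equiv.swap_comm j i]

end Permutations

lemma inv_sub_mul_inv_sub_add_eq_zero {K : Type*} [Field K] {a b c : K} (hab : a - b ≠ 0)
    (hbc : b - c ≠ 0) (hca : c - a ≠ 0) :
    (a - b)⁻¹ * (b - c)⁻¹ + (b - c)⁻¹ * (c - a)⁻¹ + (c - a)⁻¹ * (a - b)⁻¹ = 0 := by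
  field_simp
  ring

section DunklOperators

open SmoothFunctions TopologicalSpace

variable {ι : Type*}

lemma isOpen_setOf_injective [Finite ι] : IsOpen {x : ι → ℝ | Function.Injective x} := by
  simp only [Function.Injective, Set.ofPred_forall]
  refine isOpen_iInter_of_finite fun i => isOpen_iInter_of_finite fun j => ?_
  by_cases hij : i = j
  · simp [hij]
  · simpa [hij] using isOpen_ne_fun (continuous_apply i) (continuous_apply j)

variable [Fintype ι]

variable (ι) in
/-- The configuration space of distinct labelled points on the line; for `ι = Fin N` its underlying
set is `Omega N`. -/
def configSpace : Opens (ι → ℝ) :=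
  ⟨{x | Function.Injective x}, isOpen_setOf_injective⟩

lemma sub_ne_zero_of_mem_configSpace {x : ι → ℝ} (hx : x ∈ configSpace ι) {i j : ι} (hij : i ≠ j) :
    x i - x j ≠ 0 :=
  sub_ne_zero.2 fun h => hij (hx h)

lemma comp_mem_configSpace (σ : Equiv.Perm ι) (x : ι → ℝ) :
    x ∘ σ ∈ configSpace ι ↔ x ∈ configSpace ι :=
  σ.injective_comp x

/-- The algebra of operators on smooth functions on the configuration space. -/
abbrev ConfigEnd (ι : Type*) [Fintype ι] : Type _ := Module.End ℝ (SmoothFunctions (configSpace ι))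

/-- The permutation of coordinates `F ↦ (x ↦ F (x ∘ σ))`; transpositions give `P_{ij}`. -/
def permEnd (σ : Equiv.Perm ι) : ConfigEnd ι :=
  compEnd (ContinuousLinearMap.pi fun i => .proj (σ i)) (comp_mem_configSpace σ)

lemma permEnd_apply (σ : Equiv.Perm ι) (F : SmoothFunctions (configSpace ι)) (x : ι → ℝ) :
    permEnd σ F x = F (x ∘ σ) :=
  rfl

/-- Multiplication by the `i`-th coordinate. -/
def xEnd (i : ι) : ConfigEnd ι :=
  mulEnd (contDiff_apply ℝ ℝ i).contDiffOn

lemma xEnd_apply (i : ι) (F : SmoothFunctions (configSpace ι)) (x : ι → ℝ) :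
    xEnd i F x = x i * F x :=
  rfl

lemma xEnd_commute (i j : ι) : Commute (xEnd i) (xEnd j) :=
  end_ext fun F x _ => mul_left_comm (x i) (x j) (F x)

lemma dirDeriv_mul_permEnd (v : ι → ℝ) (σ : Equiv.Perm ι) :
    dirDeriv v * permEnd σ = permEnd σ * dirDeriv (v ∘ σ) :=
  dirDeriv_mul_compEnd v _ (comp_mem_configSpace σ)

lemma dirDeriv_lie_xEnd (v : ι → ℝ) (j : ι) : ⁅(dirDeriv v : ConfigEnd ι), xEnd j⁆ = v j • 1 :=
  end_ext fun F x hx => by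
    rw [lie_apply, xEnd_apply, xEnd, dirDeriv_mulEnd_apply v _ F hx, (hasFDerivAt_apply j x).fderiv,
      ContinuousLinearMap.proj_apply, add_sub_cancel_left]
    rfl

lemma contDiffOn_inv_sub (i j : ι) :
    ContDiffOn ℝ ∞ (fun x : ι → ℝ => (x i - x j)⁻¹) (configSpace ι) := by
  obtain rfl | hij := eq_or_ne i j
  · simpa using contDiffOn_const
  · exact ((contDiff_apply ℝ ℝ i).sub (contDiff_apply ℝ ℝ j)).contDiffOn.inv
      fun x hx => sub_ne_zero_of_mem_configSpace hx hij

lemma fderiv_inv_sub_apply_eq_zero {v : ι → ℝ} {i j : ι} (hv : v i = v j) {x : ι → ℝ}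
    (hx : x ∈ configSpace ι) : fderiv ℝ (fun y : ι → ℝ => (y i - y j)⁻¹) x v = 0 := by
  obtain rfl | hij := eq_or_ne i j
  · simp
  · have hsub := (hasFDerivAt_apply (𝕜 := ℝ) (F' := fun _ => ℝ) i x).fun_sub
      (hasFDerivAt_apply (𝕜 := ℝ) (F' := fun _ => ℝ) j x)
    have hinv := (hasDerivAt_inv (sub_ne_zero_of_mem_configSpace hx hij)).comp_hasFDerivAt x hsub
    change fderiv ℝ (Inv.inv ∘ fun y : ι → ℝ => y i - y j) x v = 0
    rw [hinv.fderiv]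
    simp [hv]

variable [DecidableEq ι]

/-- The divided difference `F ↦ (F - P_{ij} F) / (x_i - x_j)`, which vanishes for `i = j`. -/
def divDiffEnd (i j : ι) : ConfigEnd ι :=
  mulEnd (contDiffOn_inv_sub i j) * (1 - permEnd (Equiv.swap i j))

lemma divDiffEnd_apply (i j : ι) (F : SmoothFunctions (configSpace ι)) (x : ι → ℝ) :
    divDiffEnd i j F x = (x i - x j)⁻¹ * (F x - F (x ∘ Equiv.swap i j)) :=
  rfl

lemma divDiffEnd_antisymm (i j : ι) : divDiffEnd j i = -divDiffEnd i j :=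
  end_ext fun F x _ => by
    change divDiffEnd j i F x = -divDiffEnd i j F x
    rw [divDiffEnd_apply, divDiffEnd_apply, Equiv.swap_comm, ← neg_sub (x i), inv_neg, neg_mul]

lemma divDiffEnd_commute_of_disjoint {i j k l : ι} (hik : i ≠ k) (hil : i ≠ l) (hjk : j ≠ k)
    (hjl : j ≠ l) : Commute (divDiffEnd i j) (divDiffEnd k l) :=
  end_ext fun F x _ => by
    have swap_comm (y : ι → ℝ) :
        (y ∘ Equiv.swap i j) ∘ Equiv.swap k l = (y ∘ Equiv.swap k l) ∘ Equiv.swap i j := by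
      funext m
      simp only [Function.comp_apply, Equiv.swap_apply_def]
      grind
    simp only [Module.End.mul_apply, divDiffEnd_apply, swap_comm, Function.comp_apply,
      Equiv.swap_apply_of_ne_of_ne hik hil, Equiv.swap_apply_of_ne_of_ne hjk hjl,
      Equiv.swap_apply_of_ne_of_ne hik.symm hjk.symm,
      Equiv.swap_apply_of_ne_of_ne hil.symm hjl.symm]
    ring

lemma divDiffEnd_mul_apply {i j k : ι} (hjk : j ≠ k) (hki : k ≠ i)
    (F : SmoothFunctions (configSpace ι)) (x : ι → ℝ) :
    (divDiffEnd i j * divDiffEnd j k) F x =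
      (x i - x j)⁻¹ * ((x j - x k)⁻¹ * (F x - F (x ∘ Equiv.swap j k)) +
        (x k - x i)⁻¹ * (F (x ∘ Equiv.swap i j) - F (x ∘ (Equiv.swap i j * Equiv.swap j k)))) := by
  have hneg : (x i - x k)⁻¹ = -(x k - x i)⁻¹ := by rw [← neg_sub, inv_neg]
  rw [Module.End.mul_apply, divDiffEnd_apply, divDiffEnd_apply, divDiffEnd_apply]
  simp only [Function.comp_apply, Equiv.swap_apply_right,
    Equiv.swap_apply_of_ne_of_ne hki hjk.symm, hneg, Equiv.Perm.coe_mul, Function.comp_assoc]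
  ring

lemma divDiffEnd_three_term {i j k : ι} (hij : i ≠ j) (hjk : j ≠ k) (hki : k ≠ i) :
    divDiffEnd i j * divDiffEnd j k + divDiffEnd j k * divDiffEnd k i +
      divDiffEnd k i * divDiffEnd i j = 0 :=
  end_ext fun F x hx => by
    change (divDiffEnd i j * divDiffEnd j k) F x + (divDiffEnd j k * divDiffEnd k i) F x +
      (divDiffEnd k i * divDiffEnd i j) F x = 0
    have inverses := inv_sub_mul_inv_sub_add_eq_zero (sub_ne_zero_of_mem_configSpace hx hij)
      (sub_ne_zero_of_mem_configSpace hx hjk) (sub_ne_zero_of_mem_configSpace hx hki)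
    rw [divDiffEnd_mul_apply hjk hki, divDiffEnd_mul_apply hki hij,
      divDiffEnd_mul_apply hij hjk, swap_mul_swap_rotate hij hki,
      ← swap_mul_swap_rotate hki hjk]
    linear_combination (F x - F (x ∘ (Equiv.swap i j * Equiv.swap j k))) * inverses

theorem isFominKirillov_divDiffEnd : IsFominKirillov (divDiffEnd (ι := ι)) where
  antisymm := divDiffEnd_antisymm
  commute_of_disjoint _ _ _ _ := divDiffEnd_commute_of_disjoint
  three_term _ _ _ := divDiffEnd_three_term

lemma dirDeriv_commute_divDiffEnd {v : ι → ℝ} {i j : ι} (hv : v i = v j) :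
    Commute (dirDeriv v) (divDiffEnd i j) := by
  have commute_inv : Commute (dirDeriv v) (mulEnd (contDiffOn_inv_sub i j)) :=
    end_ext fun F x hx => by
      rw [Module.End.mul_apply, dirDeriv_mulEnd_apply v _ F hx, fderiv_inv_sub_apply_eq_zero hv hx,
        zero_mul, add_zero, Module.End.mul_apply, mulEnd_apply]
  have commute_swap : Commute (dirDeriv v) (permEnd (Equiv.swap i j)) := by
    rw [Commute, SemiconjBy, dirDeriv_mul_permEnd, comp_swap_eq_self hv]
  exact commute_inv.mul_right ((Commute.one_right _).sub_right commute_swap)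

/-- The Dunkl operator `D_i`, as an operator on smooth functions. -/
def dunklEnd (g : ℝ) (i : ι) : ConfigEnd ι :=
  dirDeriv (Pi.single i 1) + ∑ k ∈ univ.erase i, g • divDiffEnd i k

theorem dunklEnd_commute (g : ℝ) (i j : ι) : Commute (dunklEnd g i) (dunklEnd g j) := by
  refine (isFominKirillov_divDiffEnd.smul g).commute_add_sum
    (d := fun k => dirDeriv (Pi.single k 1))
    (fun i j => dirDeriv_commute _ _) (fun i j k hki hkj => ?_) (fun i j => ?_) i j
  · exact (dirDeriv_commute_divDiffEnd (by simp [hki.symm, hkj.symm])).smul_right g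
  · rw [← dirDeriv_add]
    refine (dirDeriv_commute_divDiffEnd ?_).smul_right g
    simp [Pi.single_apply, eq_comm, add_comm]

lemma permEnd_semiconjBy_divDiffEnd (σ : Equiv.Perm ι) (i j : ι) :
    SemiconjBy (permEnd σ) (divDiffEnd i j) (divDiffEnd (σ i) (σ j)) :=
  end_ext fun F x _ => by
    have swap_comp : (x ∘ Equiv.swap (σ i) (σ j)) ∘ σ = (x ∘ σ) ∘ Equiv.swap i j := by
      rw [Function.comp_assoc, ← Equiv.Perm.coe_mul, ← Equiv.mul_swap_eq_swap_mul]
      rfl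
    simp only [Module.End.mul_apply, permEnd_apply, divDiffEnd_apply, swap_comp,
      Function.comp_apply]

lemma permEnd_semiconjBy_dunklEnd (g : ℝ) (σ : Equiv.Perm ι) (i : ι) :
    SemiconjBy (permEnd σ) (dunklEnd g i) (dunklEnd g (σ i)) := by
  have semiconjBy_dirDeriv : SemiconjBy (permEnd σ) (dirDeriv (Pi.single i 1))
      (dirDeriv (Pi.single (σ i) 1)) := by
    rw [SemiconjBy, dirDeriv_mul_permEnd, Pi.single_comp_equiv, Equiv.symm_apply_apply]
  refine semiconjBy_dirDeriv.add_right ?_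
  have reindex : ∑ k ∈ univ.erase (σ i), g • divDiffEnd (σ i) k =
      ∑ k ∈ univ.erase i, g • divDiffEnd (σ i) (σ k) :=
    (sum_equiv σ (by simp) fun _ _ => rfl).symm
  rw [SemiconjBy, reindex, mul_sum, sum_mul]
  exact sum_congr rfl fun k _ => (permEnd_semiconjBy_divDiffEnd σ i k).smul_right g

lemma divDiffEnd_lie_xEnd_apply (i k j : ι) (F : SmoothFunctions (configSpace ι)) (x : ι → ℝ) :
    ⁅divDiffEnd i k, xEnd j⁆ F x =
      (x i - x k)⁻¹ * (x j - x (Equiv.swap i k j)) * F (x ∘ Equiv.swap i k) := by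
  simp only [lie_apply, divDiffEnd_apply, xEnd_apply, Function.comp_apply]
  ring

lemma divDiffEnd_lie_xEnd_left {i k : ι} (hik : i ≠ k) :
    ⁅divDiffEnd i k, xEnd i⁆ = permEnd (Equiv.swap i k) :=
  end_ext fun F x hx => by
    rw [divDiffEnd_lie_xEnd_apply, Equiv.swap_apply_left,
      inv_mul_cancel₀ (sub_ne_zero_of_mem_configSpace hx hik), one_mul, permEnd_apply]

lemma divDiffEnd_lie_xEnd_right {i k : ι} (hik : i ≠ k) :
    ⁅divDiffEnd i k, xEnd k⁆ = -permEnd (Equiv.swap i k) := by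
  rw [divDiffEnd_antisymm k i, neg_lie, divDiffEnd_lie_xEnd_left hik.symm, Equiv.swap_comm]

lemma divDiffEnd_lie_xEnd_of_ne {i k j : ι} (hji : j ≠ i) (hjk : j ≠ k) :
    ⁅divDiffEnd i k, xEnd j⁆ = 0 :=
  end_ext fun F x _ => by
    rw [divDiffEnd_lie_xEnd_apply, Equiv.swap_apply_of_ne_of_ne hji hjk, sub_self, mul_zero,
      zero_mul]
    rfl

lemma dunklEnd_lie_xEnd (g : ℝ) (i j : ι) :
    ⁅dunklEnd g i, xEnd j⁆ = (Pi.single i 1 : ι → ℝ) j • (1 : ConfigEnd ι) +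
      ∑ k ∈ univ.erase i, g • ⁅divDiffEnd i k, xEnd j⁆ := by
  simp only [dunklEnd, add_lie, sum_lie, dirDeriv_lie_xEnd]
  simp only [Ring.lie_def, smul_mul_assoc, mul_smul_comm, smul_sub]

theorem isCherednikTriple_dunklEnd (g : ℝ) :
    IsCherednikTriple (dunklEnd g) xEnd fun i j : ι => g • permEnd (Equiv.swap i j) where
  commute_D := dunklEnd_commute g
  commute_X := xEnd_commute
  symm_Q i j := by rw [Equiv.swap_comm]
  semiconjBy i j := by
    have h := permEnd_semiconjBy_dunklEnd g (Equiv.swap i j) i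
    rw [Equiv.swap_apply_left] at h
    exact h.smul_left g
  lie_of_ne i j hij := by
    rw [dunklEnd_lie_xEnd, Pi.single_eq_of_ne hij.symm, zero_smul, zero_add,
      sum_eq_single_of_mem j (by simp [hij.symm]) fun k _ hkj => by
        rw [divDiffEnd_lie_xEnd_of_ne hij.symm hkj.symm, smul_zero],
      divDiffEnd_lie_xEnd_right hij, smul_neg]
  lie_self i := by
    rw [dunklEnd_lie_xEnd, Pi.single_eq_same, one_smul]
    congr 1
    refine sum_congr rfl fun k hk => ?_
    rw [divDiffEnd_lie_xEnd_left (ne_of_mem_erase hk).symm]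

/-- The operator `I_n`, acting on smooth functions. -/
def iopEnd (g : ℝ) (n : ℕ) : ConfigEnd ι :=
  ∑ i, dunklEnd g i ^ n

/-- The operator `S_l`, acting on smooth functions. -/
def sopEnd (g : ℝ) (l : ℕ) : ConfigEnd ι :=
  ∑ i, xEnd i * dunklEnd g i ^ l

theorem iopEnd_lie_iopEnd (g : ℝ) (l n : ℕ) : ⁅iopEnd (ι := ι) g l, iopEnd (ι := ι) g n⁆ = 0 :=
  lie_sum_pow_sum_pow (dunklEnd_commute g) l n

theorem sopEnd_lie_iopEnd (g : ℝ) (l n : ℕ) :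
    ⁅sopEnd (ι := ι) g l, iopEnd (ι := ι) g n⁆ = -(n : ℝ) • iopEnd g (l + n - 1) := by
  rw [neg_smul, Nat.cast_smul_eq_nsmul]
  exact (isCherednikTriple_dunklEnd g).lie_sum_mul_pow_sum_pow l n

theorem sopEnd_lie_sopEnd (g : ℝ) (l n : ℕ) :
    ⁅sopEnd (ι := ι) g l, sopEnd (ι := ι) g n⁆ = ((l : ℝ) - n) • sopEnd g (l + n - 1) := by
  have hcast : ((l : ℝ) - n) = ((l - n : ℤ) : ℝ) := by push_cast; rfl
  rw [hcast, Int.cast_smul_eq_zsmul]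
  exact (isCherednikTriple_dunklEnd g).lie_sum_mul_pow_sum_mul_pow l n

end DunklOperators

section Realization

open SmoothFunctions

variable {N : ℕ} {f : (Fin N → ℝ) → ℝ} {F : SmoothFunctions (configSpace (Fin N))}

lemma eqOn_Dunkl (g : ℝ) (i : Fin N) (h : Set.EqOn f F (Omega N)) :
    Set.EqOn (Dunkl g i f) (dunklEnd g i F) (Omega N) := fun x hx => by
  have hpd : pd i f x = dirDeriv (Pi.single i 1) F x := by
    rw [dirDeriv_apply _ _ hx, pd,
      (h.eventuallyEq_of_mem ((configSpace (Fin N)).isOpen.mem_nhds hx)).fderiv_eq]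
  have hDelta : Delta i f x = ∑ k ∈ univ.erase i, divDiffEnd i k F x := by
    refine sum_congr rfl fun k _ => ?_
    rw [divDiffEnd_apply, h hx, h ((comp_mem_configSpace _ x).2 hx), div_eq_inv_mul]
  rw [Dunkl, hpd, hDelta, dunklEnd, LinearMap.add_apply, LinearMap.sum_apply,
    SmoothFunctions.coe_add, Pi.add_apply, SmoothFunctions.sum_apply, mul_sum]
  rfl

lemma eqOn_Dunkl_iterate (g : ℝ) (i : Fin N) (h : Set.EqOn f F (Omega N)) (n : ℕ) :
    Set.EqOn ((Dunkl g i)^[n] f) ((dunklEnd g i ^ n) F) (Omega N) := by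
  induction n with
  | zero => exact h
  | succ n ih =>
    rw [Function.iterate_succ_apply', pow_succ']
    exact eqOn_Dunkl g i ih

lemma eqOn_Iop (g : ℝ) (h : Set.EqOn f F (Omega N)) (n : ℕ) :
    Set.EqOn (Iop g n f) (iopEnd g n F) (Omega N) := fun x hx => by
  rw [iopEnd, LinearMap.sum_apply, SmoothFunctions.sum_apply]
  exact sum_congr rfl fun i _ => eqOn_Dunkl_iterate g i h n hx

lemma eqOn_Sop (g : ℝ) (h : Set.EqOn f F (Omega N)) (l : ℕ) :
    Set.EqOn (Sop g l f) (sopEnd g l F) (Omega N) := fun x hx => by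
  rw [sopEnd, LinearMap.sum_apply, SmoothFunctions.sum_apply]
  exact sum_congr rfl fun i _ => congrArg (x i * ·) (eqOn_Dunkl_iterate g i h l hx)

end Realization

theorem Sop_Iop_algebra {N : ℕ} (g : ℝ) (l n : ℕ) (hn : 1 ≤ n)
    (f : (Fin N → ℝ) → ℝ) (hf : ContDiffOn ℝ (⊤ : ℕ∞) f (Omega N))
    (x : Fin N → ℝ) (hx : x ∈ Omega N) :
    Iop g l (Iop g n f) x = Iop g n (Iop g l f) x ∧
    Sop g l (Iop g n f) x - Iop g n (Sop g l f) x = -(n : ℝ) * Iop g (l + n - 1) f x ∧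
    Sop g l (Sop g n f) x - Sop g n (Sop g l f) x =
      ((l : ℝ) - (n : ℝ)) * Sop g (l + n - 1) f x := by
  let F : SmoothFunctions (configSpace (Fin N)) := SmoothFunctions.cutoff hf
  have hF : Set.EqOn f F (Omega N) := fun y hy => (SmoothFunctions.cutoff_apply hf hy).symm
  have hI := eqOn_Iop g hF
  have hS := eqOn_Sop g hF
  refine ⟨?_, ?_, ?_⟩
  · rw [eqOn_Iop g (hI n) l hx, eqOn_Iop g (hI l) n hx, ← sub_eq_zero, ← SmoothFunctions.lie_apply,
      iopEnd_lie_iopEnd]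
    rfl
  · rw [eqOn_Sop g (hI n) l hx, eqOn_Iop g (hS l) n hx, hI _ hx, ← SmoothFunctions.lie_apply,
      sopEnd_lie_iopEnd]
    rfl
  · rw [eqOn_Sop g (hS n) l hx, eqOn_Sop g (hS l) n hx, hS _ hx, ← SmoothFunctions.lie_apply,
      sopEnd_lie_sopEnd]
    rfl
end
end

section
/- The operators J_+ = Σ_{i=1}^N D_i², J_3 = Σ_{i=1}^N (x_i D_i + D_i x_i), and J_− = Σ_{i=1}^N x_i² (multiplication) satisfy the sl(2) relations [J_+, J_3] = 4 J_+, [J_−, J_3] = −4 J_−, and [J_+, J_−] = 2 J_3. -/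
open Finset

noncomputable section

/-- `J₊ = ∑_i D_i²`. -/
def Jplus {N : ℕ} (g : ℝ) (f : (Fin N → ℝ) → ℝ) : (Fin N → ℝ) → ℝ :=
  fun x => ∑ i, Dunkl g i (Dunkl g i f) x

/-- `J₃ = ∑_i (x_i D_i + D_i x_i)`. -/
def J3 {N : ℕ} (g : ℝ) (f : (Fin N → ℝ) → ℝ) : (Fin N → ℝ) → ℝ :=
  fun x => ∑ i, (x i * Dunkl g i f x + Dunkl g i (xmul i f) x)

/-- `J₋ = ∑_i x_i²` (multiplication operator). -/
def Jminus {N : ℕ} (f : (Fin N → ℝ) → ℝ) : (Fin N → ℝ) → ℝ :=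
  fun x => (∑ i, x i ^ 2) * f x

/-!
Leibniz' rule for `D_i` leaves a sum of divided differences of the multiplier. It vanishes for the
symmetric function `r² = ∑_k x_k²`, so `[D_i, r²] = 2 x_i`, and this commutator alone gives the two
relations involving `J₋`. For the multiplier `x_i` every divided difference is `1`; adding the
terms `(i, j)` and `(j, i)` of `∑_i x_i Δ_i` then yields `J₃ = 2 E + N + g N (N - 1)`, where `E` is
the Euler operator. Since `D_i` lowers the degree of homogeneity by one, `[D_i, E] = D_i`. Hence
`[D_i, J₃] = 2 D_i`, and the relation for `J₊` follows.
-/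

section Euler

variable {E F : Type*} [NormedAddCommGroup E] [NormedSpace ℝ E]
  [NormedAddCommGroup F] [NormedSpace ℝ F]

/-- The Euler operator `x · ∇` on functions on a normed space: the derivative at `x` in the
direction `x`. It measures degrees of homogeneity. -/
def euler (f : E → F) : E → F := fun x => fderiv ℝ f x x

lemma euler_fun_add {f h : E → F} {x : E} (hf : DifferentiableAt ℝ f x)
    (hh : DifferentiableAt ℝ h x) :
    euler (fun y => f y + h y) x = euler f x + euler h x := by
  simp only [euler, fderiv_fun_add hf hh, add_apply]

lemma euler_fun_sub {f h : E → F} {x : E} (hf : DifferentiableAt ℝ f x)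
    (hh : DifferentiableAt ℝ h x) :
    euler (fun y => f y - h y) x = euler f x - euler h x := by
  simp only [euler, fderiv_fun_sub hf hh, sub_apply]

lemma euler_const_mul {f : E → ℝ} {x : E} (hf : DifferentiableAt ℝ f x) (c : ℝ) :
    euler (fun y => c * f y) x = c * euler f x := by
  simp only [euler, fderiv_const_mul hf, smul_apply, smul_eq_mul]

lemma euler_fun_sum {ι : Type*} {s : Finset ι} {f : ι → E → F} {x : E}
    (hf : ∀ i ∈ s, DifferentiableAt ℝ (f i) x) :
    euler (fun y => ∑ i ∈ s, f i y) x = ∑ i ∈ s, euler (f i) x := by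
  simp only [euler, fderiv_fun_sum hf, _root_.sum_apply]

lemma euler_comp_clm {G : Type*} [NormedAddCommGroup G] [NormedSpace ℝ G] {f : F → G}
    (L : E →L[ℝ] F) {x : E} (hf : DifferentiableAt ℝ f (L x)) :
    euler (fun y => f (L y)) x = euler f (L x) := by
  have h : fderiv ℝ (fun y => f (L y)) x = (fderiv ℝ f (L x)).comp L :=
    (hf.hasFDerivAt.comp x L.hasFDerivAt).fderiv
  simp only [euler, h, ContinuousLinearMap.comp_apply]

lemma euler_div_clm {u : E → ℝ} {x : E} (hu : DifferentiableAt ℝ u x) (l : E →L[ℝ] ℝ)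
    (hl : l x ≠ 0) : euler (fun y => u y / l y) x = (euler u x - u x) / l x := by
  have hinv : HasFDerivAt (fun y => (l y)⁻¹) (-(l x ^ 2)⁻¹ • l) x :=
    (hasDerivAt_inv hl).comp_hasFDerivAt x l.hasFDerivAt
  simp only [euler, div_eq_mul_inv, (hu.hasFDerivAt.fun_mul hinv).fderiv, add_apply, smul_apply,
    smul_eq_mul]
  field_simp
  ring

lemma fderiv_euler_apply {f : E → F} {x : E} (hf : ContDiffAt ℝ 2 f x) (v : E) :
    fderiv ℝ (euler f) x v = euler (fun y => fderiv ℝ f y v) x + fderiv ℝ f x v := by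
  have hf' : DifferentiableAt ℝ (fderiv ℝ f) x :=
    (hf.fderiv_right (m := 1) (by norm_num)).differentiableAt one_ne_zero
  have hsymm : fderiv ℝ (fderiv ℝ f) x v x = fderiv ℝ (fderiv ℝ f) x x v :=
    hf.isSymmSndFDerivAt (by simp) v x
  have hleft : fderiv ℝ (euler f) x v = fderiv ℝ f x v + fderiv ℝ (fderiv ℝ f) x v x := by
    unfold euler
    simp [fderiv_clm_apply hf' differentiableAt_fun_id]
  have hright : euler (fun y => fderiv ℝ f y v) x = fderiv ℝ (fderiv ℝ f) x x v := by
    simp [euler, fderiv_clm_apply hf' (differentiableAt_const v)]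
  rw [hleft, hright, hsymm, add_comm]

lemma contDiffOn_euler {m n : WithTop ℕ∞} {f : E → F} {s : Set E} (hf : ContDiffOn ℝ n f s)
    (hs : IsOpen s) (hmn : m + 1 ≤ n) : ContDiffOn ℝ m (euler f) s :=
  (hf.fderiv_of_isOpen hs hmn).clm_apply contDiffOn_id

lemma euler_eq_sum {ι : Type*} [Fintype ι] [DecidableEq ι] (f : (ι → ℝ) → F) (x : ι → ℝ) :
    euler f x = ∑ i, x i • fderiv ℝ f x (Pi.single i 1) := by
  simp only [euler, ← map_smul, ← map_sum, ← pi_eq_sum_univ' x]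

end Euler

section Dunkl

variable {N : ℕ} {m n : WithTop ℕ∞} {f h p : (Fin N → ℝ) → ℝ} {x : Fin N → ℝ}

lemma isOpen_Omega : IsOpen (Omega N) := by
  have hOmega : Omega N = ⋂ (i) (j) (_ : i ≠ j), {x : Fin N → ℝ | x i ≠ x j} := by
    ext x
    simp [Omega, Function.Injective, not_imp_not]
  rw [hOmega]
  exact isOpen_iInter_of_finite fun i => isOpen_iInter_of_finite fun j =>
    isOpen_iInter_of_finite fun _ => isOpen_ne_fun (continuous_apply i) (continuous_apply j)

lemma Omega_mem_nhds (hx : x ∈ Omega N) : Omega N ∈ nhds x :=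
  isOpen_Omega.mem_nhds hx

lemma differentiableAt_of_mem_Omega (hf : ContDiffOn ℝ n f (Omega N)) (hn : n ≠ 0)
    (hx : x ∈ Omega N) : DifferentiableAt ℝ f x :=
  (hf.differentiableOn hn).differentiableAt (Omega_mem_nhds hx)

lemma comp_swap_mem_Omega (hx : x ∈ Omega N) (i j : Fin N) : x ∘ Equiv.swap i j ∈ Omega N :=
  hx.comp (Equiv.injective _)

lemma sub_ne_zero_of_mem_Omega (hx : x ∈ Omega N) {i j : Fin N} (hij : j ≠ i) : x i - x j ≠ 0 :=
  sub_ne_zero.2 (hx.ne hij.symm)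

lemma contDiffOn_pd (hf : ContDiffOn ℝ n f (Omega N)) (hmn : m + 1 ≤ n) (i : Fin N) :
    ContDiffOn ℝ m (pd i f) (Omega N) :=
  (hf.fderiv_of_isOpen isOpen_Omega hmn).clm_apply contDiffOn_const

lemma contDiffOn_pswap (hf : ContDiffOn ℝ n f (Omega N)) (i j : Fin N) :
    ContDiffOn ℝ n (Pswap i j f) (Omega N) :=
  hf.comp (Pi.compRightL ℝ (fun _ => ℝ) (Equiv.swap i j)).contDiff.contDiffOn
    fun _ hx => comp_swap_mem_Omega hx i j

lemma contDiffOn_sub_comp_swap_div_sub (hf : ContDiffOn ℝ n f (Omega N)) {i j : Fin N}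
    (hij : j ≠ i) :
    ContDiffOn ℝ n (fun y => (f y - f (y ∘ Equiv.swap i j)) / (y i - y j)) (Omega N) :=
  (hf.sub (contDiffOn_pswap hf i j)).div (by fun_prop) fun _ hx => sub_ne_zero_of_mem_Omega hx hij

lemma contDiffOn_delta (hf : ContDiffOn ℝ n f (Omega N)) (i : Fin N) :
    ContDiffOn ℝ n (Delta i f) (Omega N) :=
  ContDiffOn.sum fun _ hj => contDiffOn_sub_comp_swap_div_sub hf (ne_of_mem_erase hj)

lemma contDiffOn_dunkl (hf : ContDiffOn ℝ n f (Omega N)) (hmn : m + 1 ≤ n) (g : ℝ) (i : Fin N) :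
    ContDiffOn ℝ m (Dunkl g i f) (Omega N) :=
  (contDiffOn_pd hf hmn i).add
    (contDiffOn_const.mul (contDiffOn_delta (hf.of_le (le_self_add.trans hmn)) i))

lemma contDiffOn_xmul (hf : ContDiffOn ℝ n f (Omega N)) (i : Fin N) :
    ContDiffOn ℝ n (xmul i f) (Omega N) :=
  (contDiff_apply ℝ ℝ i).contDiffOn.mul hf

lemma contDiffOn_jminus (hf : ContDiffOn ℝ n f (Omega N)) :
    ContDiffOn ℝ n (Jminus f) (Omega N) :=
  ContDiffOn.mul (by fun_prop) hf

lemma contDiffOn_j3 (hf : ContDiffOn ℝ n f (Omega N)) (hmn : m + 1 ≤ n) (g : ℝ) :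
    ContDiffOn ℝ m (J3 g f) (Omega N) :=
  ContDiffOn.sum fun i _ => (contDiffOn_xmul (contDiffOn_dunkl hf hmn g i) i).add
    (contDiffOn_dunkl (contDiffOn_xmul hf i) hmn g i)

lemma dunkl_congr (hfh : Set.EqOn f h (Omega N)) (g : ℝ) (i : Fin N) :
    Set.EqOn (Dunkl g i f) (Dunkl g i h) (Omega N) := by
  intro x hx
  have hfderiv : fderiv ℝ f x = fderiv ℝ h x :=
    (hfh.eventuallyEq_of_mem (Omega_mem_nhds hx)).fderiv_eq
  simp only [Dunkl, pd, Delta, hfderiv, hfh hx, fun j => hfh (comp_swap_mem_Omega hx i j)]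

lemma dunkl_fun_add (hf : DifferentiableAt ℝ f x) (hh : DifferentiableAt ℝ h x) (g : ℝ)
    (i : Fin N) : Dunkl g i (fun y => f y + h y) x = Dunkl g i f x + Dunkl g i h x := by
  have hdelta : Delta i (fun y => f y + h y) x = Delta i f x + Delta i h x := by
    simp only [Delta, ← sum_add_distrib, ← add_div, add_sub_add_comm]
  simp only [Dunkl, hdelta, pd, fderiv_fun_add hf hh, add_apply]
  ring

lemma dunkl_const_mul (hf : DifferentiableAt ℝ f x) (g c : ℝ) (i : Fin N) :
    Dunkl g i (fun y => c * f y) x = c * Dunkl g i f x := by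
  have hdelta : Delta i (fun y => c * f y) x = c * Delta i f x := by
    simp only [Delta, mul_sum, ← mul_div_assoc, mul_sub]
  simp only [Dunkl, hdelta, pd, fderiv_const_mul hf, smul_apply, smul_eq_mul]
  ring

lemma pd_mul (hp : DifferentiableAt ℝ p x) (hf : DifferentiableAt ℝ f x) (i : Fin N) :
    pd i (fun y => p y * f y) x = p x * pd i f x + f x * pd i p x := by
  simp only [pd, fderiv_fun_mul hp hf, add_apply, smul_apply, smul_eq_mul]

lemma delta_mul (p f : (Fin N → ℝ) → ℝ) (i : Fin N) (x : Fin N → ℝ) :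
    Delta i (fun y => p y * f y) x = p x * Delta i f x +
      ∑ j ∈ univ.erase i, (p x - Pswap i j p x) / (x i - x j) * Pswap i j f x := by
  simp only [Delta, Pswap, mul_sum, ← sum_add_distrib]
  exact sum_congr rfl fun j _ => by ring

lemma dunkl_mul (hp : DifferentiableAt ℝ p x) (hf : DifferentiableAt ℝ f x) (g : ℝ) (i : Fin N) :
    Dunkl g i (fun y => p y * f y) x = p x * Dunkl g i f x + f x * pd i p x +
      g * ∑ j ∈ univ.erase i, (p x - Pswap i j p x) / (x i - x j) * Pswap i j f x := by
  simp only [Dunkl, pd_mul hp hf, delta_mul]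
  ring

lemma dunkl_xmul_self (hf : DifferentiableAt ℝ f x) (hx : x ∈ Omega N) (g : ℝ) (i : Fin N) :
    Dunkl g i (xmul i f) x =
      x i * Dunkl g i f x + f x + g * ∑ j ∈ univ.erase i, Pswap i j f x := by
  have hpd : pd i (fun y : Fin N → ℝ => y i) x = 1 := by
    simp [pd, (hasFDerivAt_apply (𝕜 := ℝ) i x).fderiv]
  have hquot : ∀ j ∈ univ.erase i,
      (x i - Pswap i j (fun y => y i) x) / (x i - x j) * Pswap i j f x = Pswap i j f x := by
    intro j hj
    have hne := sub_ne_zero_of_mem_Omega hx (ne_of_mem_erase hj)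
    simp only [Pswap, Function.comp_apply, Equiv.swap_apply_left, div_self hne, one_mul]
  unfold xmul
  rw [dunkl_mul (differentiableAt_apply i x) hf, hpd, sum_congr rfl hquot, mul_one]

lemma dunkl_jminus (hf : DifferentiableAt ℝ f x) (g : ℝ) (i : Fin N) :
    Dunkl g i (Jminus f) x = Jminus (Dunkl g i f) x + 2 * xmul i f x := by
  have hr : HasFDerivAt (fun y : Fin N → ℝ => ∑ k, y k ^ 2)
      (∑ k, (2 * x k) • ContinuousLinearMap.proj (R := ℝ) (φ := fun _ => ℝ) k) x :=
    HasFDerivAt.fun_sum fun k _ => by simpa using (hasFDerivAt_apply (𝕜 := ℝ) k x).pow 2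
  have hpd : pd i (fun y : Fin N → ℝ => ∑ k, y k ^ 2) x = 2 * x i := by
    simp [pd, hr.fderiv, _root_.sum_apply, Pi.single_apply]
  have hsymm (j : Fin N) : Pswap i j (fun y => ∑ k, y k ^ 2) x = ∑ k, x k ^ 2 :=
    Equiv.sum_comp (Equiv.swap i j) fun k => x k ^ 2
  unfold Jminus
  simp only [dunkl_mul hr.differentiableAt hf, hpd, hsymm, sub_self, zero_div, zero_mul,
    sum_const_zero, mul_zero, add_zero, xmul]
  ring

lemma two_mul_sum_mul_delta (hx : x ∈ Omega N) (f : (Fin N → ℝ) → ℝ) :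
    2 * ∑ i, x i * Delta i f x = ∑ i, ∑ j ∈ univ.erase i, (f x - Pswap i j f x) := by
  have hexchange : ∑ i, ∑ j ∈ univ.erase i, x i * ((f x - Pswap i j f x) / (x i - x j)) =
      ∑ i, ∑ j ∈ univ.erase i, x j * ((f x - Pswap j i f x) / (x j - x i)) :=
    sum_comm' (by simp [ne_comm])
  have hpair : ∀ i, ∀ j ∈ univ.erase i, x i * ((f x - Pswap i j f x) / (x i - x j)) +
      x j * ((f x - Pswap j i f x) / (x j - x i)) = f x - Pswap i j f x := by
    intro i j hj
    have hij := sub_ne_zero_of_mem_Omega hx (ne_of_mem_erase hj)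
    rw [Pswap, Pswap, Equiv.swap_comm j i, ← neg_sub (x i) (x j)]
    field_simp
    ring
  calc 2 * ∑ i, x i * Delta i f x
      = ∑ i, ∑ j ∈ univ.erase i, x i * ((f x - Pswap i j f x) / (x i - x j)) +
        ∑ i, ∑ j ∈ univ.erase i, x j * ((f x - Pswap j i f x) / (x j - x i)) := by
        rw [← hexchange, ← two_mul]
        simp only [Delta, Pswap, mul_sum]
    _ = ∑ i, ∑ j ∈ univ.erase i, (f x - Pswap i j f x) := by
        simp only [← sum_add_distrib]
        exact sum_congr rfl fun i _ => sum_congr rfl (hpair i)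

lemma j3_eq_euler (hf : DifferentiableAt ℝ f x) (hx : x ∈ Omega N) (g : ℝ) :
    J3 g f x = 2 * euler f x + (N + g * (N * (N - 1))) * f x := by
  have hcard : ∑ i : Fin N, ∑ _j ∈ univ.erase i, f x = N * (N - 1) * f x := by
    rcases N with _ | N
    · simp
    · simp [mul_assoc]
  have hdelta := two_mul_sum_mul_delta hx f
  simp only [sum_sub_distrib, hcard] at hdelta
  have hsum : ∑ i, x i * Dunkl g i f x = euler f x + g * ∑ i, x i * Delta i f x := by
    simp only [euler_eq_sum, Dunkl, pd, smul_eq_mul, mul_add, sum_add_distrib, mul_sum,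
      mul_left_comm g]
  calc J3 g f x
      = 2 * ∑ i, x i * Dunkl g i f x + N * f x +
          g * ∑ i, ∑ j ∈ univ.erase i, Pswap i j f x := by
        simp only [J3, dunkl_xmul_self hf hx, sum_add_distrib, ← mul_sum, sum_const, card_univ,
          Fintype.card_fin, nsmul_eq_mul]
        ring
    _ = 2 * euler f x + (N + g * (N * (N - 1))) * f x := by
        rw [hsum]
        linear_combination g * hdelta

lemma delta_euler (hf : ContDiffOn ℝ n f (Omega N)) (hn : n ≠ 0) (hx : x ∈ Omega N)
    (i : Fin N) : Delta i (euler f) x = euler (Delta i f) x + Delta i f x := by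
  have hfx := differentiableAt_of_mem_Omega hf hn hx
  have hterm : ∀ j ∈ univ.erase i,
      euler (fun y => (f y - f (y ∘ Equiv.swap i j)) / (y i - y j)) x =
        (euler f x - euler f (x ∘ Equiv.swap i j)) / (x i - x j) -
          (f x - f (x ∘ Equiv.swap i j)) / (x i - x j) := by
    intro j hj
    have hpswap : DifferentiableAt ℝ (fun y => f (y ∘ Equiv.swap i j)) x :=
      differentiableAt_of_mem_Omega (contDiffOn_pswap hf i j) hn hx
    have hswap : euler (fun y => f (y ∘ Equiv.swap i j)) x = euler f (x ∘ Equiv.swap i j) :=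
      euler_comp_clm (Pi.compRightL ℝ (fun _ => ℝ) (Equiv.swap i j))
        (differentiableAt_of_mem_Omega hf hn (comp_swap_mem_Omega hx i j))
    rw [← hswap, ← euler_fun_sub hfx hpswap, ← sub_div]
    exact euler_div_clm (hfx.fun_sub hpswap)
      (ContinuousLinearMap.proj (R := ℝ) (φ := fun _ => ℝ) i - ContinuousLinearMap.proj j)
      (sub_ne_zero_of_mem_Omega hx (ne_of_mem_erase hj))
  have hsum : euler (Delta i f) x = Delta i (euler f) x - Delta i f x := by
    unfold Delta
    rw [euler_fun_sum fun j hj => differentiableAt_of_mem_Omega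
      (contDiffOn_sub_comp_swap_div_sub hf (ne_of_mem_erase hj)) hn hx, sum_congr rfl hterm,
      sum_sub_distrib]
  rw [hsum, sub_add_cancel]

lemma dunkl_euler (hf : ContDiffOn ℝ 2 f (Omega N)) (hx : x ∈ Omega N) (g : ℝ) (i : Fin N) :
    Dunkl g i (euler f) x = euler (Dunkl g i f) x + Dunkl g i f x := by
  have hpd : DifferentiableAt ℝ (pd i f) x :=
    differentiableAt_of_mem_Omega (contDiffOn_pd hf one_add_one_eq_two.le i) one_ne_zero hx
  have hdelta : DifferentiableAt ℝ (Delta i f) x :=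
    differentiableAt_of_mem_Omega (contDiffOn_delta hf i) two_ne_zero hx
  have hpd_euler : pd i (euler f) x = euler (pd i f) x + pd i f x :=
    fderiv_euler_apply (hf.contDiffAt (Omega_mem_nhds hx)) _
  have heuler : euler (Dunkl g i f) x = euler (pd i f) x + g * euler (Delta i f) x := by
    unfold Dunkl
    rw [euler_fun_add hpd (hdelta.const_mul g), euler_const_mul hdelta]
  rw [heuler, Dunkl, Dunkl, hpd_euler, delta_euler hf two_ne_zero hx]
  ring

lemma dunkl_j3 (hf : ContDiffOn ℝ 2 f (Omega N)) (hx : x ∈ Omega N) (g : ℝ) (i : Fin N) :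
    Dunkl g i (J3 g f) x = J3 g (Dunkl g i f) x + 2 * Dunkl g i f x := by
  have hfx : DifferentiableAt ℝ f x := differentiableAt_of_mem_Omega hf two_ne_zero hx
  have heuler : DifferentiableAt ℝ (euler f) x := differentiableAt_of_mem_Omega
    (contDiffOn_euler hf isOpen_Omega one_add_one_eq_two.le) one_ne_zero hx
  have hdunkl : DifferentiableAt ℝ (Dunkl g i f) x := differentiableAt_of_mem_Omega
    (contDiffOn_dunkl hf one_add_one_eq_two.le g i) one_ne_zero hx
  have hj3 : Set.EqOn (J3 g f)
      (fun y => 2 * euler f y + (N + g * (N * (N - 1))) * f y) (Omega N) :=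
    fun y hy => j3_eq_euler (differentiableAt_of_mem_Omega hf two_ne_zero hy) hy g
  rw [dunkl_congr hj3 g i hx, dunkl_fun_add (heuler.const_mul 2) (hfx.const_mul _),
    dunkl_const_mul heuler, dunkl_const_mul hfx, dunkl_euler hf hx, j3_eq_euler hdunkl hx]
  ring

lemma j3_fun_sum {ι : Type*} {s : Finset ι} {F : ι → (Fin N → ℝ) → ℝ}
    (hF : ∀ k ∈ s, DifferentiableAt ℝ (F k) x) (hx : x ∈ Omega N) (g : ℝ) :
    J3 g (fun y => ∑ k ∈ s, F k y) x = ∑ k ∈ s, J3 g (F k) x := by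
  rw [j3_eq_euler (DifferentiableAt.fun_sum hF) hx, euler_fun_sum hF,
    sum_congr rfl fun k hk => j3_eq_euler (hF k hk) hx g, sum_add_distrib, mul_sum, mul_sum]

lemma dunkl_dunkl_j3 (hf : ContDiffOn ℝ 3 f (Omega N)) (hx : x ∈ Omega N) (g : ℝ) (i : Fin N) :
    Dunkl g i (Dunkl g i (J3 g f)) x =
      J3 g (Dunkl g i (Dunkl g i f)) x + 4 * Dunkl g i (Dunkl g i f) x := by
  have hD : ContDiffOn ℝ 2 (Dunkl g i f) (Omega N) :=
    contDiffOn_dunkl hf two_add_one_eq_three.le g i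
  have hDx := differentiableAt_of_mem_Omega hD two_ne_zero hx
  have hJD : DifferentiableAt ℝ (J3 g (Dunkl g i f)) x := differentiableAt_of_mem_Omega
    (contDiffOn_j3 hD one_add_one_eq_two.le g) one_ne_zero hx
  rw [dunkl_congr (fun y hy => dunkl_j3 (hf.of_le (by norm_num)) hy g i) g i hx,
    dunkl_fun_add hJD (hDx.const_mul 2), dunkl_const_mul hDx, dunkl_j3 hD hx]
  ring

lemma jplus_j3_sub_j3_jplus (hf : ContDiffOn ℝ 3 f (Omega N)) (hx : x ∈ Omega N) (g : ℝ) :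
    Jplus g (J3 g f) x - J3 g (Jplus g f) x = 4 * Jplus g f x := by
  have hDD (i : Fin N) : ContDiffOn ℝ 1 (Dunkl g i (Dunkl g i f)) (Omega N) :=
    contDiffOn_dunkl (contDiffOn_dunkl hf two_add_one_eq_three.le g i) one_add_one_eq_two.le g i
  have hsum : J3 g (Jplus g f) x = ∑ i, J3 g (Dunkl g i (Dunkl g i f)) x :=
    j3_fun_sum (fun i _ => differentiableAt_of_mem_Omega (hDD i) one_ne_zero hx) hx g
  rw [hsum]
  simp only [Jplus, dunkl_dunkl_j3 hf hx, sum_add_distrib, mul_sum, add_sub_cancel_left]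

lemma jminus_j3_sub_j3_jminus (hf : DifferentiableAt ℝ f x) (g : ℝ) :
    Jminus (J3 g f) x - J3 g (Jminus f) x = -4 * Jminus f x := by
  have hterm (i : Fin N) :
      x i * Dunkl g i (Jminus f) x + Dunkl g i (xmul i (Jminus f)) x =
        (∑ k, x k ^ 2) * (x i * Dunkl g i f x + Dunkl g i (xmul i f) x) +
          4 * f x * x i ^ 2 := by
    have hcomm : xmul i (Jminus f) = Jminus (xmul i f) := funext fun y => mul_left_comm _ _ _
    have hxf : DifferentiableAt ℝ (xmul i f) x := (differentiableAt_apply i x).mul hf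
    rw [hcomm, dunkl_jminus hf, dunkl_jminus hxf]
    simp only [Jminus, xmul]
    ring
  simp only [J3, hterm, sum_add_distrib, ← mul_sum, Jminus]
  ring

lemma dunkl_dunkl_jminus (hf : ContDiffOn ℝ 2 f (Omega N)) (hx : x ∈ Omega N) (g : ℝ)
    (i : Fin N) : Dunkl g i (Dunkl g i (Jminus f)) x =
      Jminus (Dunkl g i (Dunkl g i f)) x + 2 * (x i * Dunkl g i f x + Dunkl g i (xmul i f) x) := by
  have hD : ContDiffOn ℝ 1 (Dunkl g i f) (Omega N) :=
    contDiffOn_dunkl hf one_add_one_eq_two.le g i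
  have hJD := differentiableAt_of_mem_Omega (contDiffOn_jminus hD) one_ne_zero hx
  have hxf := differentiableAt_of_mem_Omega (contDiffOn_xmul hf i) two_ne_zero hx
  have hcomm : Set.EqOn (Dunkl g i (Jminus f))
      (fun y => Jminus (Dunkl g i f) y + 2 * xmul i f y) (Omega N) :=
    fun y hy => dunkl_jminus (differentiableAt_of_mem_Omega hf two_ne_zero hy) g i
  rw [dunkl_congr hcomm g i hx, dunkl_fun_add hJD (hxf.const_mul 2), dunkl_const_mul hxf,
    dunkl_jminus (differentiableAt_of_mem_Omega hD one_ne_zero hx), xmul]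
  ring

lemma jplus_jminus_sub_jminus_jplus (hf : ContDiffOn ℝ 2 f (Omega N)) (hx : x ∈ Omega N)
    (g : ℝ) : Jplus g (Jminus f) x - Jminus (Jplus g f) x = 2 * J3 g f x := by
  simp only [Jplus, dunkl_dunkl_jminus hf hx, sum_add_distrib, ← mul_sum, J3, Jminus,
    add_sub_cancel_left]

end Dunkl

theorem sl2_relations_general {N : ℕ} (g : ℝ)
    (f : (Fin N → ℝ) → ℝ) (hf : ContDiffOn ℝ 3 f (Omega N))
    (x : Fin N → ℝ) (hx : x ∈ Omega N) :
    Jplus g (J3 g f) x - J3 g (Jplus g f) x = 4 * Jplus g f x ∧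
    Jminus (J3 g f) x - J3 g (Jminus f) x = -4 * Jminus f x ∧
    Jplus g (Jminus f) x - Jminus (Jplus g f) x = 2 * J3 g f x :=
  ⟨jplus_j3_sub_j3_jplus hf hx g,
    jminus_j3_sub_j3_jminus (differentiableAt_of_mem_Omega hf three_ne_zero hx) g,
    jplus_jminus_sub_jminus_jplus (hf.of_le (by norm_num)) hx g⟩

theorem sl2_relations {N : ℕ} (g : ℝ)
    (f : (Fin N → ℝ) → ℝ) (hf : ContDiffOn ℝ (⊤ : ℕ∞) f (Omega N))
    (x : Fin N → ℝ) (hx : x ∈ Omega N) :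
    Jplus g (J3 g f) x - J3 g (Jplus g f) x = 4 * Jplus g f x ∧
    Jminus (J3 g f) x - J3 g (Jminus f) x = -4 * Jminus f x ∧
    Jplus g (Jminus f) x - Jminus (Jplus g f) x = 2 * J3 g f x :=
  sl2_relations_general g f (contDiffOn_infty.1 hf 3) x hx
end
end
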